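/- The complete bipartite graph K_{3,3} does not admit a nowhere-zero Z_2^3-flow such that the three edges incident to some vertex are all rich: for every nowhere-zero Z_2^3-flow θ on K_{3,3} and every vertex v of K_{3,3}, it is not the case that all three edges incident to v are rich with respect to θ. -/

import Mathlib

open SimpleGraph

/-- A proper edge-coloring: distinct edges of `G` sharing an endpoint get different colors. -/
def IsProperEdgeColoring {V C : Type*} (G : SimpleGraph V) (c : Sym2 V → C) : Prop :=
  ∀ e ∈ G.edgeSet, ∀ f ∈ G.edgeSet, e ≠ f → (∃ v : V, v ∈ e ∧ v ∈ f) → c e ≠ c f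

/-- `S_c(v)`: the set of colors appearing on edges incident to `v`. -/
def colorSet {V C : Type*} (G : SimpleGraph V) (c : Sym2 V → C) (v : V) : Set C :=
  c '' G.incidenceSet v

/-- The edge `uv` is poor: exactly 3 colors appear around its endpoints. -/
def IsPoorAt {V C : Type*} (G : SimpleGraph V) (c : Sym2 V → C) (u v : V) : Prop :=
  (colorSet G c u ∪ colorSet G c v).ncard = 3

/-- The edge `uv` is rich: exactly 5 colors appear around its endpoints. -/
def IsRichAt {V C : Type*} (G : SimpleGraph V) (c : Sym2 V → C) (u v : V) : Prop :=
  (colorSet G c u ∪ colorSet G c v).ncard = 5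

/-- A normal edge-coloring: a proper edge-coloring in which every edge is poor or rich. -/
def IsNormalEdgeColoring {V C : Type*} (G : SimpleGraph V) (c : Sym2 V → C) : Prop :=
  IsProperEdgeColoring G c ∧
    ∀ u v : V, G.Adj u v → IsPoorAt G c u v ∨ IsRichAt G c u v

/-- A nowhere-zero flow with values in an additive group `M` (all elements self-inverse in our
applications): nonzero on every edge, and at every vertex the values on incident edges sum to 0. -/
def IsNowhereZeroFlow {V M : Type*} [AddCommMonoid M] (G : SimpleGraph V)
    (θ : Sym2 V → M) : Prop :=
  (∀ e ∈ G.edgeSet, θ e ≠ 0) ∧ ∀ v : V, ∑ᶠ e ∈ G.incidenceSet v, θ e = 0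

/-- `G` is `k`-edge-connected: connected, and still connected after deleting any set of
fewer than `k` edges. -/
def EdgeConnGe {V : Type*} (G : SimpleGraph V) (k : ℕ) : Prop :=
  G.Connected ∧ ∀ s : Set (Sym2 V), s.ncard < k → (G.deleteEdges s).Connected

/-- `G` is cubic: every vertex has degree 3. -/
def IsCubic {V : Type*} (G : SimpleGraph V) : Prop :=
  ∀ v : V, (G.neighborSet v).ncard = 3

/-- `G` is bridgeless: no edge is a bridge. -/
def Bridgeless {V : Type*} (G : SimpleGraph V) : Prop :=
  ∀ e ∈ G.edgeSet, ¬ G.IsBridge e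

/-!
The three values around `v`, together with `0`, form a subgroup `W` of order 4, hence of index 2,
in `Z_2^3`. If every edge `vx` is rich, then no other edge at `x` takes a value in `W`. A second
vertex `u` with the same neighbours as `v` therefore has three incident values outside `W`, and the
sum of three elements outside a subgroup of index 2 is again outside it, so it is not `0`.
-/

section Incidence

variable {V : Type*} (G : SimpleGraph V) (v : V)

theorem incidenceSet_eq_image_neighborSet :
    G.incidenceSet v = (s(v, ·)) '' G.neighborSet v := by
  ext e
  constructor
  · rintro ⟨he, hv⟩
    obtain ⟨x, rfl⟩ := Sym2.mem_iff_exists.mp hv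
    exact ⟨x, he, rfl⟩
  · rintro ⟨x, hx, rfl⟩
    exact (G.mem_incidence_iff_neighbor).mpr hx

theorem colorSet_eq_image_neighborSet {C : Type*} (c : Sym2 V → C) :
    colorSet G c v = (fun x ↦ c s(v, x)) '' G.neighborSet v := by
  rw [colorSet, incidenceSet_eq_image_neighborSet, Set.image_image]

theorem finsum_mem_incidenceSet {M : Type*} [AddCommMonoid M] (f : Sym2 V → M) :
    ∑ᶠ e ∈ G.incidenceSet v, f e = ∑ᶠ x ∈ G.neighborSet v, f s(v, x) := by
  rw [incidenceSet_eq_image_neighborSet, finsum_mem_image]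
  exact fun x _ y _ hxy ↦ Sym2.congr_right.mp hxy

end Incidence

theorem finsum_mem_triple {α M : Type*} [AddCommMonoid M] (f : α → M) {x y z : α}
    (hxy : x ≠ y) (hxz : x ≠ z) (hyz : y ≠ z) :
    ∑ᶠ i ∈ ({x, y, z} : Set α), f i = f x + f y + f z := by
  rw [finsum_mem_insert f (by simp [hxy, hxz]) (Set.toFinite _), finsum_mem_pair hyz, add_assoc]

section Rich

variable {V C : Type*} {G : SimpleGraph V} {c : Sym2 V → C} {u v x : V}

theorem IsCubic.finite_neighborSet (hG : IsCubic G) (v : V) : (G.neighborSet v).Finite :=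
  Set.finite_of_ncard_ne_zero (by simp [hG v])

theorem IsCubic.finite_colorSet (hG : IsCubic G) (c : Sym2 V → C) (v : V) :
    (colorSet G c v).Finite := by
  rw [colorSet_eq_image_neighborSet]
  exact (hG.finite_neighborSet v).image _

theorem IsCubic.ncard_colorSet_le (hG : IsCubic G) (c : Sym2 V → C) (v : V) :
    (colorSet G c v).ncard ≤ 3 := by
  rw [colorSet_eq_image_neighborSet, ← hG v]
  exact Set.ncard_image_le (hG.finite_neighborSet v)

theorem IsRichAt.notMem_colorSet (hG : IsCubic G) (hrich : IsRichAt G c v x)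
    (hvx : G.Adj v x) (hux : G.Adj u x) (huv : u ≠ v) : c s(u, x) ∉ colorSet G c v := by
  intro hmem
  set rest := G.neighborSet x \ {u, v}
  have hrest : rest.ncard = 1 := by
    rw [Set.ncard_sdiff (by simp [Set.pair_subset_iff, hux.symm, hvx.symm]), hG x,
      Set.ncard_pair huv]
  have hrest_finite : rest.Finite := (hG.finite_neighborSet x).sdiff
  have hcover : colorSet G c v ∪ colorSet G c x ⊆
      colorSet G c v ∪ (fun y ↦ c s(x, y)) '' rest := by
    refine Set.union_subset Set.subset_union_left ?_
    rw [colorSet_eq_image_neighborSet G x]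
    rintro _ ⟨y, hy, rfl⟩
    by_cases hyu : y = u
    · exact .inl (by simpa only [hyu, Sym2.eq_swap] using hmem)
    by_cases hyv : y = v
    · refine .inl ?_
      rw [colorSet_eq_image_neighborSet]
      exact ⟨x, hvx, by simp only [hyv, Sym2.eq_swap]⟩
    · exact .inr ⟨y, ⟨hy, by simp [hyu, hyv]⟩, rfl⟩
  have : 5 ≤ 3 + 1 := calc
    5 = (colorSet G c v ∪ colorSet G c x).ncard := hrich.symm
    _ ≤ (colorSet G c v ∪ (fun y ↦ c s(x, y)) '' rest).ncard :=
      Set.ncard_le_ncard hcover ((hG.finite_colorSet c v).union (hrest_finite.image _))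
    _ ≤ (colorSet G c v).ncard + ((fun y ↦ c s(x, y)) '' rest).ncard := Set.ncard_union_le _ _
    _ ≤ 3 + 1 := add_le_add (hG.ncard_colorSet_le c v)
      ((Set.ncard_image_le hrest_finite).trans_eq hrest)
  omega

end Rich

section IndexTwo

variable {M : Type*} [AddCommGroup M]

theorem add_add_notMem_of_index_two {W : AddSubgroup M} (hW : W.index = 2) {a b c : M}
    (ha : a ∉ W) (hb : b ∉ W) (hc : c ∉ W) : a + b + c ∉ W := by
  simp [AddSubgroup.add_mem_iff_of_index_two hW, ha, hb, hc]

variable [Module (ZMod 2) M] {a b c : M}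

theorem eq_add_of_add_add_eq_zero (h : a + b + c = 0) : c = a + b := by
  rw [← ZModModule.neg_eq_self c, ← eq_neg_of_add_eq_zero_left h]

theorem coe_span_pair_zmod_two (a b : M) :
    (Submodule.span (ZMod 2) {a, b} : Set M) = {0, a, b, a + b} := by
  have exists_scalar (p : ZMod 2 → Prop) : (∃ r, p r) ↔ p 0 ∨ p 1 := Fin.exists_fin_two
  ext x
  simp only [SetLike.mem_coe, Submodule.mem_span_pair, exists_scalar, eq_comm (b := x), zero_smul,
    one_smul, zero_add, add_zero, Set.mem_insert_iff, Set.mem_singleton_iff]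
  tauto

theorem ncard_zero_pair_add (ha : a ≠ 0) (hb : b ≠ 0) (hab : a + b ≠ 0) :
    ({0, a, b, a + b} : Set M).ncard = 4 := by
  have hne : a ≠ b := fun h ↦ hab (by rw [h, ZModModule.add_self])
  rw [Set.ncard_insert_of_notMem (by simp [ha.symm, hb.symm, hab.symm]),
    Set.ncard_insert_of_notMem (by simp [hne, hb]), Set.ncard_pair (by simpa using ha)]

theorem exists_addSubgroup_eq_of_add_add_eq_zero (hM : Nat.card M = 8) (ha : a ≠ 0) (hb : b ≠ 0)
    (hc : c ≠ 0) (habc : a + b + c = 0) :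
    ∃ W : AddSubgroup M, W.index = 2 ∧ (W : Set M) = {0, a, b, c} := by
  obtain rfl := eq_add_of_add_add_eq_zero habc
  set W := (Submodule.span (ZMod 2) {a, b}).toAddSubgroup
  have hcoe : (W : Set M) = {0, a, b, a + b} := coe_span_pair_zmod_two a b
  have hcard : Nat.card W = 4 := by
    rw [← ncard_zero_pair_add ha hb hc, ← hcoe]
    exact Nat.card_coe_set_eq _
  have hindex : 4 * W.index = 8 := by rw [← hcard, W.card_mul_index, hM]
  exact ⟨W, by omega, hcoe⟩

end IndexTwo

section Flow

variable {V M : Type*} {G : SimpleGraph V} {θ : Sym2 V → M} {u v x y z : V}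

theorem IsNowhereZeroFlow.ne_zero [AddCommMonoid M] (hθ : IsNowhereZeroFlow G θ)
    (h : G.Adj u v) : θ s(u, v) ≠ 0 :=
  hθ.1 _ h

theorem IsNowhereZeroFlow.add_add_eq_zero [AddCommMonoid M] (hθ : IsNowhereZeroFlow G θ)
    (hxy : x ≠ y) (hxz : x ≠ z) (hyz : y ≠ z) (hv : G.neighborSet v = {x, y, z}) :
    θ s(v, x) + θ s(v, y) + θ s(v, z) = 0 := by
  rw [← hθ.2 v, finsum_mem_incidenceSet, hv, finsum_mem_triple _ hxy hxz hyz]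

variable [AddCommGroup M] [Module (ZMod 2) M]

theorem IsNowhereZeroFlow.exists_addSubgroup_eq_insert_zero_colorSet (hM : Nat.card M = 8)
    (hG : IsCubic G) (hθ : IsNowhereZeroFlow G θ) (v : V) :
    ∃ W : AddSubgroup M, W.index = 2 ∧ (W : Set M) = insert 0 (colorSet G θ v) := by
  obtain ⟨x, y, z, hxy, hxz, hyz, hv⟩ := Set.ncard_eq_three.mp (hG v)
  have hadj : ∀ w ∈ ({x, y, z} : Set V), G.Adj v w := fun w hw ↦ by rwa [← hv] at hw
  rw [colorSet_eq_image_neighborSet, hv]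
  simp only [Set.image_insert_eq, Set.image_singleton]
  exact exists_addSubgroup_eq_of_add_add_eq_zero hM (hθ.ne_zero (hadj x (by simp)))
    (hθ.ne_zero (hadj y (by simp))) (hθ.ne_zero (hadj z (by simp)))
    (hθ.add_add_eq_zero hxy hxz hyz hv)

end Flow

section CompleteBipartite

theorem neighborSet_completeBipartiteGraph_inl {α β : Type*} (a : α) :
    (completeBipartiteGraph α β).neighborSet (.inl a) = Set.range .inr := by
  ext (x | x) <;> simp

theorem neighborSet_completeBipartiteGraph_inr {α β : Type*} (b : β) :
    (completeBipartiteGraph α β).neighborSet (.inr b) = Set.range .inl := by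
  ext (x | x) <;> simp

theorem exists_twin_completeBipartiteGraph {α β : Type*} [Nontrivial α] [Nontrivial β]
    (v : α ⊕ β) :
    ∃ u ≠ v, (completeBipartiteGraph α β).neighborSet u =
      (completeBipartiteGraph α β).neighborSet v := by
  rcases v with a | b
  · obtain ⟨a', ha'⟩ := exists_ne a
    exact ⟨.inl a', by simpa using ha', by simp only [neighborSet_completeBipartiteGraph_inl]⟩
  · obtain ⟨b', hb'⟩ := exists_ne b
    exact ⟨.inr b', by simpa using hb', by simp only [neighborSet_completeBipartiteGraph_inr]⟩

theorem isCubic_completeBipartiteGraph {α β : Type*} (hα : Nat.card α = 3) (hβ : Nat.card β = 3) :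
    IsCubic (completeBipartiteGraph α β) := by
  rintro (a | b)
  · rw [neighborSet_completeBipartiteGraph_inl, Set.ncard_range_of_injective Sum.inr_injective, hβ]
  · rw [neighborSet_completeBipartiteGraph_inr, Set.ncard_range_of_injective Sum.inl_injective, hα]

end CompleteBipartite

theorem stmt_17_general {V M : Type*} [AddCommGroup M] [Module (ZMod 2) M] (hM : Nat.card M = 8)
    {G : SimpleGraph V} (hG : IsCubic G) {θ : Sym2 V → M} (hθ : IsNowhereZeroFlow G θ) {u v : V}
    (huv : u ≠ v) (htwin : G.neighborSet u = G.neighborSet v) :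
    ¬ ∀ x, G.Adj v x → IsRichAt G θ v x := by
  intro hrich
  obtain ⟨W, hW, hcoe⟩ := hθ.exists_addSubgroup_eq_insert_zero_colorSet hM hG v
  obtain ⟨x, y, z, hxy, hxz, hyz, hu⟩ := Set.ncard_eq_three.mp (hG u)
  have houtside : ∀ w ∈ ({x, y, z} : Set V), θ s(u, w) ∉ W := by
    intro w hw
    have huw : G.Adj u w := by rwa [← hu] at hw
    have hvw : G.Adj v w := by rwa [← hu, htwin] at hw
    rw [← SetLike.mem_coe, hcoe, Set.mem_insert_iff, not_or]
    exact ⟨hθ.ne_zero huw, (hrich w hvw).notMem_colorSet hG hvw huw huv⟩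
  apply add_add_notMem_of_index_two hW (houtside x (by simp)) (houtside y (by simp))
    (houtside z (by simp))
  rw [hθ.add_add_eq_zero hxy hxz hyz hu]
  exact W.zero_mem

theorem stmt_17 (θ : Sym2 (Fin 3 ⊕ Fin 3) → ZMod 2 × ZMod 2 × ZMod 2)
    (hθ : IsNowhereZeroFlow (completeBipartiteGraph (Fin 3) (Fin 3)) θ)
    (v : Fin 3 ⊕ Fin 3) :
    ¬ ∀ x : Fin 3 ⊕ Fin 3, (completeBipartiteGraph (Fin 3) (Fin 3)).Adj v x →
        IsRichAt (completeBipartiteGraph (Fin 3) (Fin 3)) θ v x := by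
  obtain ⟨u, huv, htwin⟩ := exists_twin_completeBipartiteGraph v
  exact stmt_17_general (by simp) (isCubic_completeBipartiteGraph (by simp) (by simp)) hθ huv htwin
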